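/- arXiv:1502.07107 — 2 statements merged into one kernel-verified Lean document; each statement's English description precedes it below -/
import Mathlib

section
/- The potential V is bounded on (0, ∞): there exists a constant C > 0 such that |V(r)| ≤ C for all r > 0. -/
open Matrix MeasureTheory

/-!
Write `M = A + G` and `Q = sᵀ M⁻¹ s`, so that `V = -2 Q'`. Since `G' = s sᵀ`,
`Q' = s'ᵀ M⁻¹ s + sᵀ M⁻¹ s' - Q²`, and as `s` and `s'` are bounded it is enough to bound `M⁻¹`
on `[0, ∞)`. The functions `sin (μ i ρ)` are orthogonal in mean, hence `r⁻¹ M(r) → ½ 1`: this gives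
`M⁻¹ → 0` at infinity, while `M⁻¹` is continuous on compact intervals.
-/

open Filter Topology
open scoped Ring

section Mean

theorem tendsto_inv_mul_integral_cos (c : ℝ) :
    Tendsto (fun r : ℝ => r⁻¹ * ∫ ρ in (0 : ℝ)..r, Real.cos (c * ρ)) atTop
      (𝓝 (if c = 0 then 1 else 0)) := by
  split_ifs with hc
  · refine tendsto_const_nhds.congr' ?_
    filter_upwards [eventually_ne_atTop 0] with r hr
    simp [hc, hr]
  · refine tendsto_inv_atTop_zero.zero_mul_isBoundedUnder_le
      (isBoundedUnder_of ⟨|c⁻¹|, fun r => ?_⟩)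
    rw [Function.comp_apply, intervalIntegral.integral_comp_mul_left _ hc, integral_cos, mul_zero,
      Real.sin_zero, sub_zero, smul_eq_mul, norm_mul]
    exact mul_le_of_le_one_right (abs_nonneg _) (Real.abs_sin_le_one _)

theorem integral_sin_mul_sin_eq_sub_integral_cos (a b x y : ℝ) :
    ∫ ρ in x..y, Real.sin (a * ρ) * Real.sin (b * ρ) =
      ((∫ ρ in x..y, Real.cos ((a - b) * ρ)) - ∫ ρ in x..y, Real.cos ((a + b) * ρ)) / 2 := by
  rw [← intervalIntegral.integral_sub (Continuous.intervalIntegrable (by fun_prop) _ _)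
    (Continuous.intervalIntegrable (by fun_prop) _ _), ← intervalIntegral.integral_div]
  congr 1 with ρ
  rw [sub_mul, add_mul, ← Real.two_mul_sin_mul_sin]
  ring

theorem tendsto_inv_mul_integral_sin_mul_sin {a b : ℝ} (hab : a + b ≠ 0) :
    Tendsto (fun r : ℝ => r⁻¹ * ∫ ρ in (0 : ℝ)..r, Real.sin (a * ρ) * Real.sin (b * ρ)) atTop
      (𝓝 (if a = b then 1 / 2 else 0)) := by
  have h := ((tendsto_inv_mul_integral_cos (a - b)).sub
    (tendsto_inv_mul_integral_cos (a + b))).div_const 2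
  simp only [← mul_sub, mul_div_assoc, ← integral_sin_mul_sin_eq_sub_integral_cos, sub_eq_zero,
    if_neg hab, sub_zero, ite_div, zero_div] at h
  exact h

end Mean

section Inverse

theorem exists_norm_le_of_continuousOn_Ici_of_tendsto {α E : Type*} [LinearOrder α]
    [TopologicalSpace α] [CompactIccSpace α] [SeminormedAddCommGroup E] {f : α → E} {a : α} {x : E}
    (hf : ContinuousOn f (Set.Ici a)) (hlim : Tendsto f atTop (𝓝 x)) :
    ∃ K, ∀ t, a ≤ t → ‖f t‖ ≤ K := by
  have : Nonempty α := ⟨a⟩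
  obtain ⟨b, hb⟩ := eventually_atTop.1 (hlim.norm.eventually_le_const (lt_add_one ‖x‖))
  obtain ⟨K, hK⟩ := isCompact_Icc.exists_bound_of_continuousOn
    (hf.mono (Set.Icc_subset_Ici_self : Set.Icc a b ⊆ Set.Ici a))
  refine ⟨max K (‖x‖ + 1), fun t hat => ?_⟩
  rcases le_total t b with htb | hbt
  · exact (hK t ⟨hat, htb⟩).trans (le_max_left _ _)
  · exact (hb t hbt).trans (le_max_right _ _)

theorem ringInverse_eq_smul_ringInverse_smul {𝕜 R : Type*} [CommSemiring 𝕜] [Semiring R]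
    [Algebra 𝕜 R] {c : 𝕜} {x : R} (h : IsUnit (c • x)) : x⁻¹ʳ = c • (c • x)⁻¹ʳ := by
  have hright : x * c • (c • x)⁻¹ʳ = 1 := by
    rw [mul_smul_comm, ← smul_mul_assoc, Ring.mul_inverse_cancel _ h]
  have hleft : c • (c • x)⁻¹ʳ * x = 1 := by
    rw [smul_mul_assoc, ← mul_smul_comm, Ring.inverse_mul_cancel _ h]
  exact Ring.inverse_unit ⟨x, c • (c • x)⁻¹ʳ, hright, hleft⟩

variable {𝕜 R : Type*} [NormedRing R] [HasSummableGeomSeries R]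

theorem tendsto_ringInverse_zero {α : Type*} [NormedField 𝕜] [NormedAlgebra 𝕜 R] {l : Filter α}
    {c : α → 𝕜} {f : α → R} {x : R} (hc : Tendsto c l (𝓝 0)) (hx : IsUnit x)
    (hf : Tendsto (fun t => c t • f t) l (𝓝 x)) : Tendsto (fun t => (f t)⁻¹ʳ) l (𝓝 0) := by
  obtain ⟨u, rfl⟩ := hx
  have hlim := hc.smul ((NormedRing.inverse_continuousAt u).tendsto.comp hf)
  rw [zero_smul] at hlim
  refine hlim.congr' ?_
  filter_upwards [hf.eventually (Units.isOpen.mem_nhds u.isUnit)] with t ht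
  exact (ringInverse_eq_smul_ringInverse_smul ht).symm

theorem hasDerivAt_ringInverse_comp [NontriviallyNormedField 𝕜] [NormedAlgebra 𝕜 R]
    {f : 𝕜 → R} {f' : R} {t : 𝕜} (hf : HasDerivAt f f' t) (hunit : IsUnit (f t)) :
    HasDerivAt (fun t => (f t)⁻¹ʳ) (-((f t)⁻¹ʳ * f' * (f t)⁻¹ʳ)) t := by
  obtain ⟨u, hu⟩ := hunit
  exact ((hu ▸ hasFDerivAt_ringInverse (𝕜 := 𝕜) u).comp_hasDerivAt t hf).congr_deriv
    (by simp [← hu])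

end Inverse

section QuadraticForm

open scoped Matrix.Norms.Operator

variable {ι 𝕜 R : Type*} [Fintype ι]

theorem norm_dotProduct_le [NonUnitalSeminormedRing R] (x y : ι → R) :
    ‖x ⬝ᵥ y‖ ≤ Fintype.card ι * (‖x‖ * ‖y‖) := by
  have hterm (i : ι) : ‖x i * y i‖ ≤ ‖x‖ * ‖y‖ :=
    norm_mul_le_of_le (norm_le_pi_norm x i) (norm_le_pi_norm y i)
  simpa [dotProduct] using norm_sum_le_of_le Finset.univ fun i _ => hterm i

theorem norm_dotProduct_mulVec_le_of_le [NonUnitalSeminormedRing R] {x y : ι → R}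
    {N : Matrix ι ι R} {p q K : ℝ} (hx : ‖x‖ ≤ p) (hN : ‖N‖ ≤ K) (hy : ‖y‖ ≤ q) :
    ‖x ⬝ᵥ N *ᵥ y‖ ≤ Fintype.card ι * (p * (K * q)) := by
  have hp := (norm_nonneg x).trans hx
  have hK := (norm_nonneg N).trans hN
  calc ‖x ⬝ᵥ N *ᵥ y‖ ≤ Fintype.card ι * (‖x‖ * ‖N *ᵥ y‖) := norm_dotProduct_le x _
    _ ≤ Fintype.card ι * (‖x‖ * (‖N‖ * ‖y‖)) := by gcongr; exact linfty_opNorm_mulVec N y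
    _ ≤ Fintype.card ι * (p * (K * q)) := by gcongr

variable [NontriviallyNormedField 𝕜]

theorem hasDerivAt_matrix {m n E : Type*} [Finite m] [Finite n] [NormedAddCommGroup E]
    [NormedSpace 𝕜 E] {M : 𝕜 → Matrix m n E} {M' : Matrix m n E} {t : 𝕜} :
    HasDerivAt M M' t ↔ ∀ i j, HasDerivAt (fun t => M t i j) (M' i j) t := by
  cases nonempty_fintype m
  cases nonempty_fintype n
  exact hasDerivAt_pi.trans (forall_congr' fun _ => hasDerivAt_pi)

theorem hasDerivAt_dotProduct [NormedRing R] [NormedAlgebra 𝕜 R] {x y : 𝕜 → ι → R}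
    {x' y' : ι → R} {t : 𝕜} (hx : HasDerivAt x x' t) (hy : HasDerivAt y y' t) :
    HasDerivAt (fun t => x t ⬝ᵥ y t) (x' ⬝ᵥ y t + x t ⬝ᵥ y') t := by
  rw [dotProduct, dotProduct, ← Finset.sum_add_distrib]
  exact HasDerivAt.fun_sum fun i _ => (hasDerivAt_pi.1 hx i).mul (hasDerivAt_pi.1 hy i)

theorem hasDerivAt_mulVec [NormedRing R] [NormedAlgebra 𝕜 R] {M : 𝕜 → Matrix ι ι R}
    {x : 𝕜 → ι → R} {M' : Matrix ι ι R} {x' : ι → R} {t : 𝕜}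
    (hM : HasDerivAt M M' t) (hx : HasDerivAt x x' t) :
    HasDerivAt (fun t => M t *ᵥ x t) (M' *ᵥ x t + M t *ᵥ x') t :=
  hasDerivAt_pi.2 fun i => hasDerivAt_dotProduct (hasDerivAt_pi.1 hM i) hx

variable [DecidableEq ι] [NormedCommRing R] [NormedAlgebra 𝕜 R] [CompleteSpace R]

theorem hasDerivAt_matrix_inv {M : 𝕜 → Matrix ι ι R} {M' : Matrix ι ι R} {t : 𝕜}
    (hM : HasDerivAt M M' t) (hunit : IsUnit (M t)) :
    HasDerivAt (fun t => (M t)⁻¹) (-((M t)⁻¹ * M' * (M t)⁻¹)) t := by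
  have : @CompleteSpace (Matrix ι ι R) PseudoMetricSpace.toUniformSpace :=
    inferInstanceAs (CompleteSpace (ι → ι → R))
  simp only [nonsing_inv_eq_ringInverse]
  exact hasDerivAt_ringInverse_comp hM hunit

theorem hasDerivAt_dotProduct_inv_mulVec {M : 𝕜 → Matrix ι ι R} {x : 𝕜 → ι → R} {x' : ι → R}
    {t : 𝕜} (hx : HasDerivAt x x' t) (hM : HasDerivAt M (vecMulVec (x t) (x t)) t)
    (hunit : IsUnit (M t)) :
    HasDerivAt (fun t => x t ⬝ᵥ (M t)⁻¹ *ᵥ x t)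
      (x' ⬝ᵥ (M t)⁻¹ *ᵥ x t + x t ⬝ᵥ (M t)⁻¹ *ᵥ x' - (x t ⬝ᵥ (M t)⁻¹ *ᵥ x t) ^ 2) t := by
  have hsq : x t ⬝ᵥ ((M t)⁻¹ * vecMulVec (x t) (x t) * (M t)⁻¹) *ᵥ x t =
      (x t ⬝ᵥ (M t)⁻¹ *ᵥ x t) ^ 2 := by
    rw [← mulVec_mulVec, ← mulVec_mulVec, vecMulVec_mulVec, op_smul_eq_smul, mulVec_smul,
      dotProduct_smul, smul_eq_mul, sq]
  convert hasDerivAt_dotProduct hx (hasDerivAt_mulVec (hasDerivAt_matrix_inv hM hunit) hx) using 1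
  rw [neg_mulVec, dotProduct_add, dotProduct_neg, hsq]
  ring

end QuadraticForm

section Sine

variable {ι : Type*}

/-- The vector `s(r)` with components `sin (μ i r)`, complexified. -/
noncomputable def sineVec (μ : ι → ℝ) (r : ℝ) : ι → ℂ :=
  fun i => (Real.sin (μ i * r) : ℂ)

/-- The Gram matrix `G(r)` of the functions `sin (μ i ρ)` in `L²(0, r)`, complexified. -/
noncomputable def sineGram (μ : ι → ℝ) (r : ℝ) : Matrix ι ι ℂ :=
  of fun i j => ((∫ ρ in (0 : ℝ)..r, Real.sin (μ i * ρ) * Real.sin (μ j * ρ) : ℝ) : ℂ)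

variable (μ : ι → ℝ) (r : ℝ)

theorem hasDerivAt_sineVec :
    HasDerivAt (sineVec μ) (fun i => ((Real.cos (μ i * r) * μ i : ℝ) : ℂ)) r :=
  hasDerivAt_pi.2 fun i => HasDerivAt.ofReal_comp <| by
    simpa using ((hasDerivAt_id r).const_mul (μ i)).sin

theorem hasDerivAt_sineGram [Finite ι] :
    HasDerivAt (sineGram μ) (vecMulVec (sineVec μ r) (sineVec μ r)) r := by
  refine hasDerivAt_matrix.2 fun i j => ?_
  have hcont : Continuous fun ρ => Real.sin (μ i * ρ) * Real.sin (μ j * ρ) := by fun_prop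
  rw [vecMulVec_apply, sineVec, sineVec, ← Complex.ofReal_mul]
  exact (intervalIntegral.integral_hasDerivAt_right (hcont.intervalIntegrable 0 r)
    (hcont.stronglyMeasurableAtFilter _ _) hcont.continuousAt).ofReal_comp

theorem tendsto_inv_smul_sineGram [DecidableEq ι] {μ : ι → ℝ} (hpos : ∀ i, 0 < μ i)
    (hinj : Function.Injective μ) :
    Tendsto (fun r : ℝ => r⁻¹ • sineGram μ r) atTop (𝓝 ((1 / 2 : ℝ) • 1)) := by
  refine tendsto_pi_nhds.2 fun i => tendsto_pi_nhds.2 fun j => ?_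
  have hmean := tendsto_inv_mul_integral_sin_mul_sin (add_pos (hpos i) (hpos j)).ne'
  convert (Complex.continuous_ofReal.tendsto _).comp hmean using 2 with r
  · simp [sineGram]
  · by_cases hij : i = j <;> simp [hij, hinj.eq_iff, one_apply]

variable [Fintype ι]

theorem norm_sineVec_le_one : ‖sineVec μ r‖ ≤ 1 :=
  (pi_norm_le_iff_of_nonneg zero_le_one).2 fun _ =>
    (Complex.norm_real _).trans_le (Real.abs_sin_le_one _)

theorem norm_deriv_sineVec_le : ‖deriv (sineVec μ) r‖ ≤ ‖μ‖ := by
  rw [(hasDerivAt_sineVec μ r).deriv]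
  refine (pi_norm_le_iff_of_nonneg (norm_nonneg μ)).2 fun i => ?_
  rw [Complex.norm_real, norm_mul]
  exact (mul_le_of_le_one_left (norm_nonneg _) (Real.abs_cos_le_one _)).trans (norm_le_pi_norm μ i)

open scoped Matrix.Norms.Operator

variable {μ} [DecidableEq ι]

theorem exists_norm_inv_add_sineGram_le (hpos : ∀ i, 0 < μ i) (hinj : Function.Injective μ)
    {A : Matrix ι ι ℂ} (hunit : ∀ r, 0 ≤ r → IsUnit (A + sineGram μ r)) :
    ∃ K, ∀ r, 0 ≤ r → ‖(A + sineGram μ r)⁻¹‖ ≤ K := by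
  have hlim : Tendsto (fun r : ℝ => r⁻¹ • (A + sineGram μ r)) atTop (𝓝 ((1 / 2 : ℝ) • 1)) := by
    simpa [smul_add] using
      (tendsto_inv_atTop_zero.smul_const A).add (tendsto_inv_smul_sineGram hpos hinj)
  have hhalf : IsUnit ((1 / 2 : ℝ) • (1 : Matrix ι ι ℂ)) :=
    (isUnit_one : IsUnit (1 : Matrix ι ι ℂ)).smul (Units.mk0 (1 / 2 : ℝ) (by norm_num))
  have hzero := tendsto_ringInverse_zero tendsto_inv_atTop_zero hhalf hlim
  simp only [← nonsing_inv_eq_ringInverse] at hzero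
  refine exists_norm_le_of_continuousOn_Ici_of_tendsto (fun r hr => ?_) hzero
  exact (hasDerivAt_matrix_inv ((hasDerivAt_sineGram μ r).const_add A)
    (hunit r hr)).continuousAt.continuousWithinAt

theorem exists_norm_deriv_sineVec_dotProduct_le (hpos : ∀ i, 0 < μ i)
    (hinj : Function.Injective μ) {A : Matrix ι ι ℂ}
    (hunit : ∀ r, 0 ≤ r → IsUnit (A + sineGram μ r)) :
    ∃ C, ∀ r, 0 ≤ r →
      ‖deriv (fun t => sineVec μ t ⬝ᵥ (A + sineGram μ t)⁻¹ *ᵥ sineVec μ t) r‖ ≤ C := by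
  obtain ⟨K, hK⟩ := exists_norm_inv_add_sineGram_le hpos hinj hunit
  let bound (p q : ℝ) := Fintype.card ι * (p * (K * q))
  refine ⟨bound ‖μ‖ 1 + bound 1 ‖μ‖ + bound 1 1 ^ 2, fun r hr => ?_⟩
  have hform {x y : ι → ℂ} {p q : ℝ} (hx : ‖x‖ ≤ p) (hy : ‖y‖ ≤ q) :
      ‖x ⬝ᵥ (A + sineGram μ r)⁻¹ *ᵥ y‖ ≤ bound p q :=
    norm_dotProduct_mulVec_le_of_le hx (hK r hr) hy
  have hs := norm_sineVec_le_one μ r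
  have hs' := norm_deriv_sineVec_le μ r
  rw [(hasDerivAt_dotProduct_inv_mulVec (hasDerivAt_sineVec μ r).differentiableAt.hasDerivAt
    ((hasDerivAt_sineGram μ r).const_add A) (hunit r hr)).deriv]
  refine norm_sub_le_of_le (norm_add_le_of_le (hform hs' hs) (hform hs hs')) ?_
  rw [norm_pow]
  exact pow_le_pow_left₀ (norm_nonneg _) (hform hs hs) 2

end Sine

theorem stmt_10_general {ι : Type*} [Fintype ι] [DecidableEq ι] (μ : ι → ℝ)
    (hμpos : ∀ i, 0 < μ i) (hμinj : Function.Injective μ)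
    (G : ℝ → Matrix ι ι ℂ)
    (hG : ∀ (r : ℝ) (i j : ι),
      G r i j = ((∫ ρ in (0 : ℝ)..r, Real.sin (μ i * ρ) * Real.sin (μ j * ρ) : ℝ) : ℂ))
    (A : Matrix ι ι ℂ) (hinv : ∀ r : ℝ, 0 ≤ r → IsUnit (A + G r))
    (s : ℝ → ι → ℂ) (hs : ∀ (r : ℝ) (i : ι), s r i = ((Real.sin (μ i * r) : ℝ) : ℂ))
    (v : ℝ → ι → ℂ) (hv : ∀ r : ℝ, v r = -((A + G r)⁻¹ *ᵥ s r))
    (V : ℝ → ℂ)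
    (hV : ∀ r : ℝ, V r = 2 * deriv (fun t : ℝ => ∑ j, ((Real.sin (μ j * t) : ℝ) : ℂ) * v t j) r) :
    ∃ C > (0 : ℝ), ∀ r : ℝ, 0 < r → ‖V r‖ ≤ C := by
  obtain rfl : G = sineGram μ := funext fun r => Matrix.ext (hG r)
  obtain rfl : s = sineVec μ := funext fun r => funext (hs r)
  have hform (t : ℝ) : ∑ j, ((Real.sin (μ j * t) : ℝ) : ℂ) * v t j =
      -(sineVec μ t ⬝ᵥ (A + sineGram μ t)⁻¹ *ᵥ sineVec μ t) := by
    rw [← dotProduct_neg, ← hv]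
    rfl
  obtain ⟨C, hC⟩ := exists_norm_deriv_sineVec_dotProduct_le hμpos hμinj hinv
  refine ⟨2 * |C| + 1, by positivity, fun r hr => ?_⟩
  rw [hV, funext hform, deriv.fun_neg, norm_mul, norm_neg, Complex.norm_ofNat]
  linarith [hC r hr.le, le_abs_self C]

/-- the potential `V` is bounded on `(0,∞)`. -/
theorem stmt_10 (n : ℕ) (hn : 1 ≤ n) (μ : Fin n → ℝ)
    (hμpos : ∀ i, 0 < μ i) (hμanti : StrictAnti μ)
    (G : ℝ → Matrix (Fin n) (Fin n) ℂ)
    (hG : ∀ (r : ℝ) (i j : Fin n),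
      G r i j = ((∫ ρ in (0:ℝ)..r, Real.sin (μ i * ρ) * Real.sin (μ j * ρ) : ℝ) : ℂ))
    (a : Fin n → ℂ) (ha : ∀ j, a j ≠ 0 ∧ 0 ≤ (a j).re) (hinv : ∀ r : ℝ, 0 ≤ r → IsUnit (Matrix.diagonal a + G r))
    (s : ℝ → Fin n → ℂ) (hs : ∀ (r : ℝ) (i : Fin n), s r i = ((Real.sin (μ i * r) : ℝ) : ℂ))
    (v : ℝ → Fin n → ℂ) (hv : ∀ r : ℝ, v r = -((Matrix.diagonal a + G r)⁻¹ *ᵥ s r))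
    (V : ℝ → ℂ)
    (hV : ∀ r : ℝ, V r = 2 * deriv (fun t : ℝ => ∑ j, ((Real.sin (μ j * t) : ℝ) : ℂ) * v t j) r) :
    ∃ C > (0:ℝ), ∀ r : ℝ, 0 < r → ‖V r‖ ≤ C :=
  stmt_10_general μ hμpos hμanti.injective G hG (.diagonal a) hinv s hs v hv V hV
end

section
/- There exist constants C > 0 and r₀ > 0 such that for all r ≥ r₀ one has ‖v′(r) + (2/r)Mc(r) − (4/r²){ s(r)·ᵗs(r)·s(r) + A M c(r) + H(r) M c(r) }‖ ≤ C r⁻³, where M = Diag(μ₁, …, μₙ), v′ is the derivative of v, and ‖·‖ is the norm on ℂⁿ. -/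
open Matrix MeasureTheory

/-!
Evaluating the Gram integrals gives `A + G r = (r / 2) • 1 + (A + H r)` with `H` bounded, so with
`t = 2 / r` the inverse `P` of `A + G r` has the Neumann expansion
`P = t • 1 - t ^ 2 • (A + H r) + O(t ^ 3)`. Since `G' = s sᵀ` and `s' = M c`, the derivative of
`v = -P s` is `v' = P (s sᵀ) P s - P M c`. Its first term is `t ^ 2 • (s sᵀ) s + O(t ^ 3)`, and the
second one is `t • M c - t ^ 2 • (A + H r) M c + O(t ^ 3)`.
-/

open Filter Asymptotics Topology
open scoped Ring

section Algebra

variable {𝕜 R : Type*} [Field 𝕜] [Ring R] [Algebra 𝕜 R]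

theorem isUnit_inv_smul_one {τ : 𝕜} (hτ : τ ≠ 0) : IsUnit (τ⁻¹ • (1 : R)) :=
  isUnit_one.smul (Units.mk0 τ⁻¹ (inv_ne_zero hτ))

theorem inv_smul_one_add_eq_mul {τ : 𝕜} (hτ : τ ≠ 0) (κ : R) :
    τ⁻¹ • (1 : R) + κ = (τ⁻¹ • 1) * (1 + τ • κ) := by
  simp [mul_add, smul_smul, hτ]

theorem ringInverse_inv_smul_one_add {τ : 𝕜} (hτ : τ ≠ 0) (κ : R) :
    (τ⁻¹ • (1 : R) + κ)⁻¹ʳ = τ • (1 + τ • κ)⁻¹ʳ := by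
  have hunit : IsUnit (τ⁻¹ • (1 : R)) := isUnit_inv_smul_one hτ
  have hinv : (τ⁻¹ • (1 : R))⁻¹ʳ = τ • 1 := by
    rw [← hunit.mul_right_inj, Ring.mul_inverse_cancel _ hunit]
    simp [smul_smul, hτ]
  rw [inv_smul_one_add_eq_mul hτ, Ring.inverse_mul (.inl hunit), hinv, mul_smul_one]

end Algebra

section Bounded

variable {α 𝕜 E : Type*} [NormedField 𝕜] [NormedAddCommGroup E] [NormedSpace 𝕜 E]
  {l : Filter α} {t : α → 𝕜} {K : α → E}

theorem isBigO_smul_self {u : α → 𝕜} (hK : K =O[l] (1 : α → 𝕜)) : (fun x ↦ u x • K x) =O[l] u := by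
  simpa using (isBigO_refl u l).smul hK

theorem tendsto_smul_zero_of_isBigO_one (ht : Tendsto t l (𝓝 0)) (hK : K =O[l] (1 : α → 𝕜)) :
    Tendsto (fun x ↦ t x • K x) l (𝓝 0) :=
  (isBigO_smul_self hK).trans_tendsto ht

end Bounded

section Resolvent

variable {α 𝕜 R : Type*} [NormedField 𝕜] [NormedRing R] [NormedAlgebra 𝕜 R]
  [HasSummableGeomSeries R] {l : Filter α} {t : α → 𝕜} {K : α → R}

theorem eventually_isUnit_inv_smul_one_add (ht : Tendsto t l (𝓝[≠] 0))
    (hK : K =O[l] (1 : α → 𝕜)) : ∀ᶠ x in l, IsUnit ((t x)⁻¹ • (1 : R) + K x) := by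
  obtain ⟨ht0, htne⟩ := tendsto_nhdsWithin_iff.1 ht
  have hone : Tendsto (fun x ↦ 1 + t x • K x) l (𝓝 1) := by
    simpa using (tendsto_smul_zero_of_isBigO_one ht0 hK).const_add 1
  filter_upwards [hone.eventually (Units.nhds 1), htne] with x hx htx
  rw [inv_smul_one_add_eq_mul htx]
  exact (isUnit_inv_smul_one htx).mul hx

theorem isBigO_ringInverse_inv_smul_one_add_sub_add (ht : Tendsto t l (𝓝[≠] 0))
    (hK : K =O[l] (1 : α → 𝕜)) :
    (fun x ↦ ((t x)⁻¹ • (1 : R) + K x)⁻¹ʳ - t x • 1 + t x ^ 2 • K x) =O[l] fun x ↦ t x ^ 3 := by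
  obtain ⟨ht0, htne⟩ := tendsto_nhdsWithin_iff.1 ht
  have hneumann : (fun x ↦ (1 + t x • K x)⁻¹ʳ - 1 + t x • K x) =O[l] fun x ↦ t x ^ 2 := by
    have := (NormedRing.inverse_add_norm_diff_second_order (1 : Rˣ)).comp_tendsto
      (tendsto_smul_zero_of_isBigO_one ht0 hK)
    simpa [Function.comp_def] using this.trans ((isBigO_smul_self hK).norm_left.pow 2)
  refine ((isBigO_refl t l).smul hneumann).congr' ?_ (.of_forall fun x ↦ ?_)
  · filter_upwards [htne] with x hx
    rw [ringInverse_inv_smul_one_add hx, smul_add, smul_sub, smul_smul, sq]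
  · exact (pow_succ' (t x) 2).symm

theorem isBigO_ringInverse_inv_smul_one_add_sub (ht : Tendsto t l (𝓝[≠] 0))
    (hK : K =O[l] (1 : α → 𝕜)) :
    (fun x ↦ ((t x)⁻¹ • (1 : R) + K x)⁻¹ʳ - t x • 1) =O[l] fun x ↦ t x ^ 2 := by
  have ht1 : t =O[l] (1 : α → 𝕜) := (tendsto_nhdsWithin_iff.1 ht).1.isBigO_one 𝕜
  have hcube : (fun x ↦ t x ^ 3) =O[l] fun x ↦ t x ^ 2 :=
    ((isBigO_refl (fun x ↦ t x ^ 2) l).mul ht1).congr (fun x ↦ (pow_succ (t x) 2).symm)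
      fun x ↦ mul_one (t x ^ 2)
  simpa using ((isBigO_ringInverse_inv_smul_one_add_sub_add ht hK).trans hcube).sub
    (isBigO_smul_self (u := fun x ↦ t x ^ 2) hK)

theorem isBigO_ringInverse_inv_smul_one_add (ht : Tendsto t l (𝓝[≠] 0))
    (hK : K =O[l] (1 : α → 𝕜)) : (fun x ↦ ((t x)⁻¹ • (1 : R) + K x)⁻¹ʳ) =O[l] t := by
  have ht1 : t =O[l] (1 : α → 𝕜) := (tendsto_nhdsWithin_iff.1 ht).1.isBigO_one 𝕜
  have hsq : (fun x ↦ t x ^ 2) =O[l] t := by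
    simpa [sq] using (isBigO_refl t l).mul ht1
  simpa using ((isBigO_ringInverse_inv_smul_one_add_sub ht hK).trans hsq).add
    (isBigO_smul_self (u := t) (isBigO_const_const (1 : R) (one_ne_zero' 𝕜) l))

theorem isBigO_ringInverse_mul_mul_ringInverse_sub {W : α → R} (ht : Tendsto t l (𝓝[≠] 0))
    (hK : K =O[l] (1 : α → 𝕜)) (hW : W =O[l] (1 : α → 𝕜)) :
    (fun x ↦ ((t x)⁻¹ • (1 : R) + K x)⁻¹ʳ * W x * ((t x)⁻¹ • (1 : R) + K x)⁻¹ʳ - t x ^ 2 • W x)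
      =O[l] fun x ↦ t x ^ 3 := by
  set P : α → R := fun x ↦ ((t x)⁻¹ • (1 : R) + K x)⁻¹ʳ
  have hPsub : (fun x ↦ P x - t x • 1) =O[l] fun x ↦ t x ^ 2 :=
    isBigO_ringInverse_inv_smul_one_add_sub ht hK
  have hleft : (fun x ↦ (P x - t x • 1) * W x * P x) =O[l] fun x ↦ t x ^ 3 := by
    simpa [pow_succ] using (hPsub.mul hW).mul (isBigO_ringInverse_inv_smul_one_add ht hK)
  have hright : (fun x ↦ t x • (W x * (P x - t x • 1))) =O[l] fun x ↦ t x ^ 3 := by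
    simpa [pow_succ'] using (isBigO_refl t l).smul (hW.mul hPsub)
  refine (hleft.add hright).congr_left fun x ↦ ?_
  simp only [sub_mul, mul_sub, smul_mul_assoc, one_mul, mul_smul_comm, mul_one, smul_sub, smul_smul,
    sq]
  abel

end Resolvent

section Derivative

theorem hasDerivAt_ringInverse {𝕜 R : Type*} [NontriviallyNormedField 𝕜] [NormedRing R]
    [NormedAlgebra 𝕜 R] [HasSummableGeomSeries R] {B : 𝕜 → R} {B' : R} {r : 𝕜}
    (hB : HasDerivAt B B' r) (hu : IsUnit (B r)) :
    HasDerivAt (fun x ↦ (B x)⁻¹ʳ) (-((B r)⁻¹ʳ * B' * (B r)⁻¹ʳ)) r := by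
  obtain ⟨u, hu⟩ := hu
  have hinv := hasFDerivAt_ringInverse (𝕜 := 𝕜) u
  rw [hu] at hinv
  refine (hinv.comp_hasDerivAt r hB).congr_deriv ?_
  simp [← hu]

variable {𝕜 S m n : Type*} [NontriviallyNormedField 𝕜] [NormedRing S] [NormedAlgebra 𝕜 S]
  {A : 𝕜 → Matrix m n S} {A' : Matrix m n S} {r : 𝕜}

theorem hasDerivAt_matrix_iff [Finite n] :
    HasDerivAt A A' r ↔ ∀ i j, HasDerivAt (fun y ↦ A y i j) (A' i j) r := by
  cases nonempty_fintype n
  exact (hasDerivAt_pi (E' := fun _ : m ↦ n → S)).trans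
    (forall_congr' fun _ ↦ hasDerivAt_pi (E' := fun _ : n ↦ S))

theorem hasDerivAt_mulVec_s16 [Finite m] [Fintype n] {x : 𝕜 → n → S} {x' : n → S}
    (hA : HasDerivAt A A' r) (hx : HasDerivAt x x' r) :
    HasDerivAt (fun y ↦ A y *ᵥ x y) (A' *ᵥ x r + A r *ᵥ x') r := by
  refine hasDerivAt_pi.2 fun i ↦ ?_
  have hentry (j : n) := (hasDerivAt_matrix_iff.1 hA i j).mul (hasDerivAt_pi.1 hx j)
  refine (HasDerivAt.fun_sum fun j _ ↦ hentry j).congr_deriv ?_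
  simp [mulVec, dotProduct, Finset.sum_add_distrib]

end Derivative

section MatrixAsymptotics

open scoped Matrix.Norms.Operator

variable {α 𝕜 m n : Type*} [RCLike 𝕜] [Fintype m] [Fintype n] {l : Filter α}

theorem isBigO_mulVec {A : α → Matrix m n 𝕜} {x : α → n → 𝕜} {f g : α → ℝ} (hA : A =O[l] f)
    (hx : x =O[l] g) : (fun y ↦ A y *ᵥ x y) =O[l] fun y ↦ f y * g y :=
  (IsBigO.of_norm_le fun y ↦ linfty_opNorm_mulVec (A y) (x y)).trans (hA.norm_left.mul hx.norm_left)

theorem isBigO_matrix_of_entries {A : α → Matrix m n 𝕜} {f : α → ℝ}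
    (hA : ∀ i j, (fun y ↦ A y i j) =O[l] f) : A =O[l] f := by
  classical
  have hsingle (i : m) (j : n) : (fun y ↦ A y i j • single i j (1 : 𝕜)) =O[l] f := by
    simpa using (hA i j).smul (isBigO_const_const (single i j (1 : 𝕜)) (one_ne_zero' ℝ) l)
  have hsum : (fun y ↦ ∑ i, ∑ j, A y i j • single i j (1 : 𝕜)) =O[l] f :=
    IsBigO.fun_sum fun i _ ↦ IsBigO.fun_sum fun j _ ↦ hsingle i j
  simpa [← matrix_eq_sum_single] using hsum

variable [DecidableEq n]

theorem hasDerivAt_matrix_inv_mulVec {B : ℝ → Matrix n n 𝕜} {B' : Matrix n n 𝕜} {x : ℝ → n → 𝕜}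
    {x' : n → 𝕜} {r : ℝ} (hB : HasDerivAt B B' r) (hx : HasDerivAt x x' r) (hu : IsUnit (B r)) :
    HasDerivAt (fun y ↦ (B y)⁻¹ *ᵥ x y)
      ((B r)⁻¹ *ᵥ x' - ((B r)⁻¹ * B' * (B r)⁻¹) *ᵥ x r) r := by
  simp only [nonsing_inv_eq_ringInverse]
  refine (hasDerivAt_mulVec_s16 (hasDerivAt_ringInverse hB hu) hx).congr_deriv ?_
  rw [neg_mulVec, neg_add_eq_sub]

theorem isBigO_deriv_neg_inv_mulVec {l : Filter ℝ} {t : ℝ → ℝ} {B B' K : ℝ → Matrix n n 𝕜}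
    {x x' : ℝ → n → 𝕜} (ht : Tendsto t l (𝓝[≠] 0)) (hBK : ∀ r, B r = (t r)⁻¹ • 1 + K r)
    (hB : ∀ r, HasDerivAt B (B' r) r) (hx : ∀ r, HasDerivAt x (x' r) r)
    (hK : K =O[l] (1 : ℝ → ℝ)) (hB' : B' =O[l] (1 : ℝ → ℝ)) (hx1 : x =O[l] (1 : ℝ → ℝ))
    (hx' : x' =O[l] (1 : ℝ → ℝ)) :
    (fun r ↦ deriv (fun y ↦ -((B y)⁻¹ *ᵥ x y)) r + t r • x' r
      - t r ^ 2 • (B' r *ᵥ x r + K r *ᵥ x' r)) =O[l] fun r ↦ t r ^ 3 := by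
  have hquadratic : (fun r ↦ ((B r)⁻¹ * B' r * (B r)⁻¹ - t r ^ 2 • B' r) *ᵥ x r)
      =O[l] fun r ↦ t r ^ 3 := by
    have := isBigO_mulVec (isBigO_ringInverse_mul_mul_ringInverse_sub ht hK hB') hx1
    simpa [hBK, nonsing_inv_eq_ringInverse] using this
  have hlinear : (fun r ↦ ((B r)⁻¹ - t r • 1 + t r ^ 2 • K r) *ᵥ x' r) =O[l] fun r ↦ t r ^ 3 := by
    have := isBigO_mulVec (isBigO_ringInverse_inv_smul_one_add_sub_add ht hK) hx'
    simpa [hBK, nonsing_inv_eq_ringInverse] using this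
  refine (hquadratic.sub hlinear).congr' ?_ .rfl
  filter_upwards [eventually_isUnit_inv_smul_one_add ht hK] with r hr
  rw [← hBK] at hr
  rw [(hasDerivAt_matrix_inv_mulVec (hB r) (hx r) hr).fun_neg.deriv]
  simp only [sub_mulVec, add_mulVec, smul_mulVec, one_mulVec, smul_add]
  abel

end MatrixAsymptotics

section SineGram

variable {ι : Type*}

/-- The vector `s(r)` with components `sin (μ i * r)`. -/
noncomputable def sinVec (μ : ι → ℝ) (r : ℝ) (i : ι) : ℂ :=
  (Real.sin (μ i * r) : ℝ)

/-- The vector `c(r)` with components `cos (μ i * r)`. -/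
noncomputable def cosVec (μ : ι → ℝ) (r : ℝ) (i : ι) : ℂ :=
  (Real.cos (μ i * r) : ℝ)

/-- The matrix `G(r)` of inner products in `L²(0, r)` of the functions `sin (μ i * ·)`. -/
noncomputable def sinGram (μ : ι → ℝ) (r : ℝ) : Matrix ι ι ℂ :=
  .of fun i j ↦ (∫ ρ in (0 : ℝ)..r, Real.sin (μ i * ρ) * Real.sin (μ j * ρ) : ℝ)

/-- The matrix `H(r)`, which is the part of `sinGram μ r` that stays bounded as `r → ∞`. -/
noncomputable def sinGramOsc [DecidableEq ι] (μ : ι → ℝ) (r : ℝ) : Matrix ι ι ℂ :=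
  .of fun i j ↦ (if i = j then -Real.sin (2 * μ i * r) / (4 * μ i)
    else Real.sin ((μ i - μ j) * r) / (2 * (μ i - μ j))
      - Real.sin ((μ i + μ j) * r) / (2 * (μ i + μ j)) : ℝ)

variable {μ : ι → ℝ}

theorem integral_cos_mul {a : ℝ} (ha : a ≠ 0) (r : ℝ) :
    ∫ ρ in (0 : ℝ)..r, Real.cos (a * ρ) = Real.sin (a * r) / a := by
  rw [intervalIntegral.integral_comp_mul_left _ ha, integral_cos]
  simp [div_eq_inv_mul]

theorem integral_sin_mul_sin (a b r : ℝ) :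
    ∫ ρ in (0 : ℝ)..r, Real.sin (a * ρ) * Real.sin (b * ρ)
      = ((∫ ρ in (0 : ℝ)..r, Real.cos ((a - b) * ρ)) - ∫ ρ in (0 : ℝ)..r, Real.cos ((a + b) * ρ))
        / 2 := by
  rw [← intervalIntegral.integral_sub (Continuous.intervalIntegrable (by fun_prop) _ _)
    (Continuous.intervalIntegrable (by fun_prop) _ _), ← intervalIntegral.integral_div]
  refine intervalIntegral.integral_congr fun ρ _ ↦ ?_
  rw [sub_mul, add_mul, ← Real.two_mul_sin_mul_sin]
  ring

theorem integral_sin_mul_sin_self {a : ℝ} (ha : a ≠ 0) (r : ℝ) :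
    ∫ ρ in (0 : ℝ)..r, Real.sin (a * ρ) * Real.sin (a * ρ)
      = r / 2 + -Real.sin (2 * a * r) / (4 * a) := by
  have htwo : 2 * a ≠ 0 := mul_ne_zero two_ne_zero ha
  have hone : ∫ ρ in (0 : ℝ)..r, Real.cos ((a - a) * ρ) = r := by simp
  rw [integral_sin_mul_sin, hone, ← two_mul, integral_cos_mul htwo]
  ring

theorem integral_sin_mul_sin_of_ne {a b : ℝ} (hsub : a - b ≠ 0) (hadd : a + b ≠ 0) (r : ℝ) :
    ∫ ρ in (0 : ℝ)..r, Real.sin (a * ρ) * Real.sin (b * ρ)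
      = Real.sin ((a - b) * r) / (2 * (a - b)) - Real.sin ((a + b) * r) / (2 * (a + b)) := by
  rw [integral_sin_mul_sin, integral_cos_mul hsub, integral_cos_mul hadd, sub_div, div_div, div_div,
    mul_comm _ 2, mul_comm _ 2]

theorem sinGram_eq_smul_one_add [DecidableEq ι] (hinj : μ.Injective) (hadd : ∀ i j, μ i + μ j ≠ 0)
    (r : ℝ) : sinGram μ r = (r / 2) • 1 + sinGramOsc μ r := by
  ext i j
  rw [Matrix.add_apply, Matrix.smul_apply, sinGram, sinGramOsc, of_apply, of_apply]
  rcases eq_or_ne i j with rfl | hij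
  · have hμ : μ i ≠ 0 := fun h ↦ hadd i i (by rw [h, add_zero])
    rw [integral_sin_mul_sin_self hμ]
    simp
  · rw [integral_sin_mul_sin_of_ne (sub_ne_zero.2 (hinj.ne hij)) (hadd i j)]
    simp [hij]

theorem add_sinGram_eq_inv_smul_one_add [DecidableEq ι] (hinj : μ.Injective)
    (hadd : ∀ i j, μ i + μ j ≠ 0) (A : Matrix ι ι ℂ) (r : ℝ) :
    A + sinGram μ r = (2 / r)⁻¹ • 1 + (A + sinGramOsc μ r) := by
  rw [sinGram_eq_smul_one_add hinj hadd, inv_div, add_left_comm]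

theorem hasDerivAt_sinGram [Finite ι] (μ : ι → ℝ) (r : ℝ) :
    HasDerivAt (sinGram μ) (vecMulVec (sinVec μ r) (sinVec μ r)) r := by
  refine hasDerivAt_matrix_iff.2 fun i j ↦ ?_
  have hcont : Continuous fun ρ ↦ Real.sin (μ i * ρ) * Real.sin (μ j * ρ) := by fun_prop
  simpa [sinGram, sinVec, vecMulVec_apply] using
    (hcont.integral_hasStrictDerivAt 0 r).hasDerivAt.ofReal_comp

theorem hasDerivAt_sinVec [Fintype ι] [DecidableEq ι] (μ : ι → ℝ) (r : ℝ) :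
    HasDerivAt (sinVec μ) (diagonal (fun i ↦ (μ i : ℂ)) *ᵥ cosVec μ r) r := by
  refine hasDerivAt_pi.2 fun i ↦ ?_
  rw [mulVec_diagonal, cosVec, ← Complex.ofReal_mul]
  refine HasDerivAt.ofReal_comp ?_
  simpa [mul_comm] using ((hasDerivAt_id r).const_mul (μ i)).sin

variable [Fintype ι] {l : Filter ℝ}

theorem isBigO_sinVec : sinVec μ =O[l] (1 : ℝ → ℝ) :=
  isBigO_pi.2 fun i ↦ .of_norm_le fun r ↦ by
    simpa [sinVec, -Complex.ofReal_sin, -Complex.ofReal_mul] using Real.abs_sin_le_one (μ i * r)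

theorem isBigO_cosVec : cosVec μ =O[l] (1 : ℝ → ℝ) :=
  isBigO_pi.2 fun i ↦ .of_norm_le fun r ↦ by
    simpa [cosVec, -Complex.ofReal_cos, -Complex.ofReal_mul] using Real.abs_cos_le_one (μ i * r)

open scoped Matrix.Norms.Operator

theorem isBigO_vecMulVec_sinVec :
    (fun r ↦ vecMulVec (sinVec μ r) (sinVec μ r)) =O[l] (1 : ℝ → ℝ) :=
  isBigO_matrix_of_entries fun i j ↦
    ((isBigO_pi.1 isBigO_sinVec i).mul (isBigO_pi.1 isBigO_sinVec j)).congr_right fun _ ↦ mul_one 1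

theorem isBigO_sin_mul_div (a b : ℝ) : (fun r ↦ Real.sin (a * r) / b) =O[l] (1 : ℝ → ℝ) :=
  .of_bound |b|⁻¹ <| .of_forall fun r ↦ by
    simpa [abs_div, div_eq_inv_mul] using
      mul_le_of_le_one_right (inv_nonneg.2 (abs_nonneg b)) (Real.abs_sin_le_one (a * r))

variable [DecidableEq ι]

theorem isBigO_sinGramOsc : sinGramOsc μ =O[l] (1 : ℝ → ℝ) := by
  refine isBigO_matrix_of_entries fun i j ↦ Complex.isBigO_ofReal_left.2 ?_
  split_ifs
  · simpa only [neg_div] using (isBigO_sin_mul_div _ _).neg_left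
  · exact (isBigO_sin_mul_div _ _).sub (isBigO_sin_mul_div _ _)

theorem tendsto_two_div_nhdsNE : Tendsto (fun r : ℝ ↦ 2 / r) atTop (𝓝[≠] 0) :=
  tendsto_nhdsWithin_iff.2 ⟨tendsto_const_nhds.div_atTop tendsto_id,
    (eventually_ne_atTop 0).mono fun _ hr ↦ div_ne_zero two_ne_zero hr⟩

theorem isBigO_const_add_sinGramOsc (A : Matrix ι ι ℂ) :
    (fun r ↦ A + sinGramOsc μ r) =O[l] (1 : ℝ → ℝ) :=
  (isBigO_const_const A (one_ne_zero' ℝ) l).add isBigO_sinGramOsc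

theorem eventually_isUnit_add_sinGram (hinj : μ.Injective) (hadd : ∀ i j, μ i + μ j ≠ 0)
    (A : Matrix ι ι ℂ) : ∀ᶠ r in atTop, IsUnit (A + sinGram μ r) := by
  simpa only [add_sinGram_eq_inv_smul_one_add hinj hadd] using
    eventually_isUnit_inv_smul_one_add tendsto_two_div_nhdsNE (isBigO_const_add_sinGramOsc A)

theorem isBigO_deriv_neg_inv_add_sinGram_mulVec (hinj : μ.Injective) (hadd : ∀ i j, μ i + μ j ≠ 0)
    (A : Matrix ι ι ℂ) :
    (fun r ↦ deriv (fun y ↦ -((A + sinGram μ y)⁻¹ *ᵥ sinVec μ y)) r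
      + (2 / r) • (diagonal (fun i ↦ (μ i : ℂ)) *ᵥ cosVec μ r)
      - (2 / r) ^ 2 • (vecMulVec (sinVec μ r) (sinVec μ r) *ᵥ sinVec μ r
        + (A + sinGramOsc μ r) *ᵥ diagonal (fun i ↦ (μ i : ℂ)) *ᵥ cosVec μ r))
      =O[atTop] fun r ↦ (r ^ 3)⁻¹ := by
  have hderiv : (fun r ↦ diagonal (fun i ↦ (μ i : ℂ)) *ᵥ cosVec μ r) =O[atTop] (1 : ℝ → ℝ) :=
    (isBigO_mulVec (isBigO_const_const (diagonal fun i ↦ (μ i : ℂ)) (one_ne_zero' ℝ) _)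
      isBigO_cosVec).congr_right fun _ ↦ mul_one 1
  have hcube : (fun r : ℝ ↦ (2 / r) ^ 3) =O[atTop] fun r ↦ (r ^ 3)⁻¹ := by
    simpa only [div_pow, div_eq_mul_inv, mul_pow, inv_pow] using isBigO_const_mul_self _ _ _
  exact (isBigO_deriv_neg_inv_mulVec tendsto_two_div_nhdsNE
    (add_sinGram_eq_inv_smul_one_add hinj hadd A) (fun r ↦ (hasDerivAt_sinGram μ r).const_add A)
    (hasDerivAt_sinVec μ) (isBigO_const_add_sinGramOsc A) isBigO_vecMulVec_sinVec isBigO_sinVec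
    hderiv).trans hcube

end SineGram

theorem exists_pos_forall_ge_norm_le_div_pow {E : Type*} [SeminormedAddCommGroup E] {f : ℝ → E}
    {p : ℝ → Prop} {k : ℕ} (hf : f =O[atTop] fun r ↦ (r ^ k)⁻¹) (hp : ∀ᶠ r in atTop, p r) :
    ∃ C > (0 : ℝ), ∃ r₀ > (0 : ℝ), ∀ r, r₀ ≤ r → p r ∧ ‖f r‖ ≤ C / r ^ k := by
  obtain ⟨C, hC, hfC⟩ := hf.exists_pos
  obtain ⟨r₀, hr₀⟩ := eventually_atTop.1 (hp.and hfC.bound)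
  refine ⟨C, hC, max r₀ 1, by positivity, fun r hr ↦ ?_⟩
  obtain ⟨hpr, hfr⟩ := hr₀ r (le_of_max_le_left hr)
  have hr0 : 0 < r := one_pos.trans_le (le_of_max_le_right hr)
  refine ⟨hpr, hfr.trans_eq ?_⟩
  rw [Real.norm_of_nonneg (by positivity), div_eq_mul_inv]

theorem stmt_16_general {ι : Type*} [Fintype ι] [DecidableEq ι] {μ : ι → ℝ}
    (hμinj : μ.Injective) (hμadd : ∀ i j, μ i + μ j ≠ 0)
    (G : ℝ → Matrix ι ι ℂ)
    (hG : ∀ (r : ℝ) (i j : ι),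
      G r i j = ((∫ ρ in (0 : ℝ)..r, Real.sin (μ i * ρ) * Real.sin (μ j * ρ) : ℝ) : ℂ))
    (H : ℝ → Matrix ι ι ℂ)
    (hH : ∀ (r : ℝ) (i j : ι), H r i j =
      ((if i = j then -Real.sin (2 * μ i * r) / (4 * μ i)
        else Real.sin ((μ i - μ j) * r) / (2 * (μ i - μ j))
          - Real.sin ((μ i + μ j) * r) / (2 * (μ i + μ j)) : ℝ) : ℂ))
    (A : Matrix ι ι ℂ)
    (s : ℝ → ι → ℂ) (hs : ∀ (r : ℝ) (i : ι), s r i = ((Real.sin (μ i * r) : ℝ) : ℂ))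
    (c : ℝ → ι → ℂ) (hc : ∀ (r : ℝ) (i : ι), c r i = ((Real.cos (μ i * r) : ℝ) : ℂ))
    (v : ℝ → ι → ℂ) (hv : ∀ r : ℝ, v r = -((A + G r)⁻¹ *ᵥ s r)) :
    ∃ C > (0 : ℝ), ∃ r₀ > (0 : ℝ), ∀ r : ℝ, r₀ ≤ r → IsUnit (A + G r) ∧
      ‖(WithLp.equiv 2 (ι → ℂ)).symm
          (deriv v r
            + ((2 / r : ℝ) : ℂ) • (Matrix.diagonal (fun i ↦ (μ i : ℂ)) *ᵥ c r)
            - ((4 / r ^ 2 : ℝ) : ℂ) •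
                (vecMulVec (s r) (s r) *ᵥ s r
                  + (A * Matrix.diagonal (fun i ↦ (μ i : ℂ))) *ᵥ c r
                  + (H r * Matrix.diagonal (fun i ↦ (μ i : ℂ))) *ᵥ c r))‖ ≤ C / r ^ 3 := by
  obtain rfl : G = sinGram μ := by ext r i j; exact hG r i j
  obtain rfl : H = sinGramOsc μ := by ext r i j; exact hH r i j
  obtain rfl : s = sinVec μ := by ext r i; exact hs r i
  obtain rfl : c = cosVec μ := by ext r i; exact hc r i
  obtain rfl : v = fun r ↦ -((A + sinGram μ r)⁻¹ *ᵥ sinVec μ r) := funext hv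
  refine exists_pos_forall_ge_norm_le_div_pow ?_ ?_
  · refine ((PiLp.continuousLinearEquiv 2 ℂ fun _ : ι ↦ ℂ).symm.isBigO_comp _ _).trans ?_
    refine (isBigO_deriv_neg_inv_add_sinGram_mulVec hμinj hμadd A).congr_left fun r ↦ ?_
    have hsq : (4 / r ^ 2 : ℝ) = (2 / r) ^ 2 := by rw [div_pow]; norm_num
    rw [Complex.coe_smul, Complex.coe_smul, hsq, add_mulVec, mulVec_mulVec, mulVec_mulVec,
      add_assoc]
  · exact eventually_isUnit_add_sinGram hμinj hμadd A

/-- second-order asymptotic expansion of `v'(r)` as `r → ∞`. -/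
theorem stmt_16 (n : ℕ) (hn : 1 ≤ n) (μ : Fin n → ℝ)
    (hμpos : ∀ i, 0 < μ i) (hμanti : StrictAnti μ)
    (G : ℝ → Matrix (Fin n) (Fin n) ℂ)
    (hG : ∀ (r : ℝ) (i j : Fin n),
      G r i j = ((∫ ρ in (0:ℝ)..r, Real.sin (μ i * ρ) * Real.sin (μ j * ρ) : ℝ) : ℂ))
    (H : ℝ → Matrix (Fin n) (Fin n) ℂ)
    (hH : ∀ (r : ℝ) (i j : Fin n), H r i j =
      ((if i = j then -Real.sin (2 * μ i * r) / (4 * μ i)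
        else Real.sin ((μ i - μ j) * r) / (2 * (μ i - μ j))
          - Real.sin ((μ i + μ j) * r) / (2 * (μ i + μ j)) : ℝ) : ℂ))
    (a : Fin n → ℂ) (ha : ∀ j, a j ≠ 0 ∧ 0 ≤ (a j).re) (hinv : ∀ r : ℝ, 0 ≤ r → IsUnit (Matrix.diagonal a + G r))
    (s : ℝ → Fin n → ℂ) (hs : ∀ (r : ℝ) (i : Fin n), s r i = ((Real.sin (μ i * r) : ℝ) : ℂ))
    (c : ℝ → Fin n → ℂ) (hc : ∀ (r : ℝ) (i : Fin n), c r i = ((Real.cos (μ i * r) : ℝ) : ℂ))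
    (v : ℝ → Fin n → ℂ) (hv : ∀ r : ℝ, v r = -((Matrix.diagonal a + G r)⁻¹ *ᵥ s r)) :
    ∃ C > (0:ℝ), ∃ r₀ > (0:ℝ), ∀ r : ℝ, r₀ ≤ r →
      ‖(WithLp.equiv 2 (Fin n → ℂ)).symm
          (deriv v r
            + ((2 / r : ℝ) : ℂ) • (Matrix.diagonal (fun i => (μ i : ℂ)) *ᵥ c r)
            - ((4 / r ^ 2 : ℝ) : ℂ) •
                (vecMulVec (s r) (s r) *ᵥ s r
                  + (Matrix.diagonal a * Matrix.diagonal (fun i => (μ i : ℂ))) *ᵥ c r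
                  + (H r * Matrix.diagonal (fun i => (μ i : ℂ))) *ᵥ c r))‖ ≤ C / r ^ 3 := by
  obtain ⟨C, hC, r₀, hr₀, hr⟩ := stmt_16_general hμanti.injective
    (fun i j ↦ (add_pos (hμpos i) (hμpos j)).ne') G hG H hH (diagonal a) s hs c hc v hv
  exact ⟨C, hC, r₀, hr₀, fun r h ↦ (hr r h).2⟩
end
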